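/- Fix integers 0 ≤ c_min and c_max ≥ c_min + 2, and a block-tuple M = (m_{c_min}, …, m_{c_max}) with m_{c_max−1} > 1. The map replacing the last set S_k by S_k ∖ {c_max} is a bijection from the set of valid tuples S = (S_1, …, S_k) for M in which c_max − 1 belongs to exactly one of the sets S_i and that set also contains c_max (necessarily that set is S_k), onto the set of valid tuples for M' satisfying property (Q); its inverse replaces the last set S'_k by S'_k ∪ {c_max}. -/

import Mathlib

/-- `M` is a block-tuple on `{cmin, …, cmax}`: each entry is a positive odd integer. -/
def IsBlockTuple (cmin cmax : ℕ) (M : ℕ → ℕ) : Prop :=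
  ∀ c ∈ Finset.Icc cmin cmax, 0 < M c ∧ Odd (M c)

/-- `S = (S_1, …, S_k)` is a valid tuple for the block-tuple `M` on `{cmin, …, cmax}`:
(1) each `S_i` is a nonempty set of consecutive integers;
(2) the union of the `S_i` is `{cmin, …, cmax}`;
(3) if `i < j`, `s ∈ S_i`, `t ∈ S_j` then `s ≤ t`;
(4) if `i < j` and `c ∈ S_i ∩ S_j` then `j = i + 1`, `|S_j| ≥ 2` and `m_c > 1`;
(5) if `i ≥ 2` (1-indexed), `|S_i| ≥ 2` and `c = min S_i` has `m_c > 1`, then `c ∈ S_{i-1}`. -/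
def IsValidTuple (cmin cmax : ℕ) (M : ℕ → ℕ) (S : List (Finset ℕ)) : Prop :=
  (∀ i : Fin S.length, ∃ a b : ℕ, a ≤ b ∧ S.get i = Finset.Icc a b) ∧
  (∀ c : ℕ, c ∈ Finset.Icc cmin cmax ↔ ∃ i : Fin S.length, c ∈ S.get i) ∧
  (∀ i j : Fin S.length, i < j → ∀ s ∈ S.get i, ∀ t ∈ S.get j, s ≤ t) ∧
  (∀ i j : Fin S.length, i < j → ∀ c : ℕ, c ∈ S.get i → c ∈ S.get j →
    (j : ℕ) = (i : ℕ) + 1 ∧ 2 ≤ (S.get j).card ∧ 1 < M c) ∧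
  (∀ i : Fin S.length, 1 ≤ (i : ℕ) → 2 ≤ (S.get i).card →
    ∀ c : ℕ, c ∈ S.get i → (∀ x ∈ S.get i, c ≤ x) → 1 < M c →
    ∃ j : Fin S.length, (j : ℕ) + 1 = (i : ℕ) ∧ c ∈ S.get j)

/-- Property (Q) for a tuple `S'` (a candidate valid tuple for `M'`): if the
minimum of the last set `S'_k` is `cmax - 1`, then `k ≥ 2` and
`cmax - 1 ∈ S'_{k-1}`. -/
def PropQ (cmax : ℕ) (S' : List (Finset ℕ)) : Prop :=
  (cmax - 1 ∈ S'.getLastD ∅ ∧ ∀ x ∈ S'.getLastD ∅, cmax - 1 ≤ x) →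
    (2 ≤ S'.length ∧ cmax - 1 ∈ S'.getD (S'.length - 2) ∅)

theorem fa_snoc (L : List (Finset ℕ)) (A : Finset ℕ) (P : ℕ → Finset ℕ → Prop) :
    (∀ i : Fin (L ++ [A]).length, P i ((L ++ [A]).get i)) ↔
      (∀ i : Fin L.length, P i (L.get i)) ∧ P L.length A := by
  constructor
  · intro h
    refine ⟨fun i => ?_, ?_⟩
    · have := h ⟨i, by have := i.2; simp⟩
      simpa using this
    · have := h ⟨L.length, by simp⟩
      simpa using this
  · rintro ⟨h, h'⟩ ⟨i, hi⟩
    by_cases hl : i < L.length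
    · have := h ⟨i, hl⟩
      simpa [List.getElem_append_left hl] using this
    · have : i = L.length := by simp at hi; omega
      subst this
      simpa using h'

theorem ex_snoc (L : List (Finset ℕ)) (A : Finset ℕ) (P : ℕ → Finset ℕ → Prop) :
    (∃ i : Fin (L ++ [A]).length, P i ((L ++ [A]).get i)) ↔
      (∃ i : Fin L.length, P i (L.get i)) ∨ P L.length A := by
  have := fa_snoc L A (fun i X => ¬ P i X)
  rw [← not_iff_not]
  push Not
  exact this

/-- Index-value version of validity. -/
theorem valid_snoc (cmin cmax : ℕ) (M : ℕ → ℕ) (L : List (Finset ℕ)) (A : Finset ℕ) :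
    IsValidTuple cmin cmax M (L ++ [A]) ↔
      ((∀ i : Fin L.length, ∃ a b : ℕ, a ≤ b ∧ L.get i = Finset.Icc a b) ∧
        ∃ a b : ℕ, a ≤ b ∧ A = Finset.Icc a b) ∧
      (∀ c : ℕ, c ∈ Finset.Icc cmin cmax ↔ (∃ i : Fin L.length, c ∈ L.get i) ∨ c ∈ A) ∧
      ((∀ i j : Fin L.length, (i : ℕ) < j → ∀ s ∈ L.get i, ∀ t ∈ L.get j, s ≤ t) ∧
        (∀ i : Fin L.length, ∀ s ∈ L.get i, ∀ t ∈ A, s ≤ t)) ∧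
      ((∀ i j : Fin L.length, (i : ℕ) < j → ∀ c : ℕ, c ∈ L.get i → c ∈ L.get j →
          (j : ℕ) = (i : ℕ) + 1 ∧ 2 ≤ (L.get j).card ∧ 1 < M c) ∧
        (∀ i : Fin L.length, ∀ c : ℕ, c ∈ L.get i → c ∈ A →
          L.length = (i : ℕ) + 1 ∧ 2 ≤ A.card ∧ 1 < M c)) ∧
      ((∀ i : Fin L.length, 1 ≤ (i : ℕ) → 2 ≤ (L.get i).card →
          ∀ c : ℕ, c ∈ L.get i → (∀ x ∈ L.get i, c ≤ x) → 1 < M c →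
          ∃ j : Fin L.length, (j : ℕ) + 1 = (i : ℕ) ∧ c ∈ L.get j) ∧
        (1 ≤ L.length → 2 ≤ A.card → ∀ c : ℕ, c ∈ A → (∀ x ∈ A, c ≤ x) → 1 < M c →
          ∃ j : Fin L.length, (j : ℕ) + 1 = L.length ∧ c ∈ L.get j)) := by
  unfold IsValidTuple
  simp only [Fin.lt_def]
  refine and_congr ?_ (and_congr ?_ (and_congr ?_ (and_congr ?_ ?_)))
  · exact fa_snoc L A (fun _ X => ∃ a b : ℕ, a ≤ b ∧ X = Finset.Icc a b)
  · exact forall_congr' fun c => iff_congr Iff.rfl (ex_snoc L A (fun _ X => c ∈ X))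
  · rw [fa_snoc L A (fun i X => ∀ j : Fin (L ++ [A]).length, i < (j : ℕ) →
      ∀ s ∈ X, ∀ t ∈ (L ++ [A]).get j, s ≤ t)]
    simp only [fun (i : ℕ) (X : Finset ℕ) => fa_snoc L A (fun j Y => i < j →
      ∀ s ∈ X, ∀ t ∈ Y, s ≤ t)]
    constructor
    · rintro ⟨h, -⟩
      exact ⟨fun i j => (h i).1 j, fun i => (h i).2 i.2⟩
    · rintro ⟨h, h'⟩
      exact ⟨fun i => ⟨h i, fun _ => h' i⟩, fun j hj => absurd j.2 (by omega),
        fun hj => absurd hj (by omega)⟩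
  · rw [fa_snoc L A (fun i X => ∀ j : Fin (L ++ [A]).length, i < (j : ℕ) →
      ∀ c : ℕ, c ∈ X → c ∈ (L ++ [A]).get j →
      (j : ℕ) = i + 1 ∧ 2 ≤ ((L ++ [A]).get j).card ∧ 1 < M c)]
    simp only [fun (i : ℕ) (X : Finset ℕ) => fa_snoc L A (fun j Y => i < j →
      ∀ c : ℕ, c ∈ X → c ∈ Y → j = i + 1 ∧ 2 ≤ Y.card ∧ 1 < M c)]
    constructor
    · rintro ⟨h, -⟩
      exact ⟨fun i j => (h i).1 j, fun i => (h i).2 i.2⟩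
    · rintro ⟨h, h'⟩
      exact ⟨fun i => ⟨h i, fun _ => h' i⟩, fun j hj => absurd j.2 (by omega),
        fun hj => absurd hj (by omega)⟩
  · simp only [fun (i c : ℕ) => ex_snoc L A (fun j Y => j + 1 = i ∧ c ∈ Y)]
    rw [fa_snoc L A (fun i X => 1 ≤ i → 2 ≤ X.card → ∀ c : ℕ, c ∈ X → (∀ x ∈ X, c ≤ x) →
      1 < M c → (∃ j : Fin L.length, (j : ℕ) + 1 = i ∧ c ∈ L.get j) ∨ L.length + 1 = i ∧ c ∈ A)]
    refine and_congr (forall_congr' fun i => ?_) ?_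
    · have : ¬ (L.length + 1 = (i : ℕ)) := by have := i.2; omega
      simp only [this, false_and, or_false]
    · have : ¬ (L.length + 1 = L.length) := by omega
      simp only [this, false_and, or_false]

/-- The last set of a valid tuple for `M` in the domain. -/
theorem fwd (cmin n : ℕ) (M : ℕ → ℕ) (L : List (Finset ℕ)) (A : Finset ℕ)
    (h2 : cmin + 1 ≤ n) (h1 : 1 < M n)
    (hV : IsValidTuple cmin (n + 1) M (L ++ [A]))
    (hU : ∃ i0 : Fin (L ++ [A]).length, n ∈ (L ++ [A]).get i0 ∧ n + 1 ∈ (L ++ [A]).get i0 ∧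
          ∀ i : Fin (L ++ [A]).length, n ∈ (L ++ [A]).get i → i = i0) :
    n + 1 ∈ A ∧ IsValidTuple cmin n M (L ++ [A \ {n + 1}]) ∧
      PropQ (n + 1) (L ++ [A \ {n + 1}]) := by
  have hU' : ∃ i0 : Fin (L ++ [A]).length, n ∈ (L ++ [A]).get i0 ∧ n + 1 ∈ (L ++ [A]).get i0 ∧
      ∀ i : Fin (L ++ [A]).length, n ∈ (L ++ [A]).get i → (i : ℕ) = i0 := by
    obtain ⟨i0, a, b, c⟩ := hU
    exact ⟨i0, a, b, fun i hi => congrArg _ (c i hi)⟩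
  rw [ex_snoc L A (fun i0 X => n ∈ X ∧ n + 1 ∈ X ∧
      ∀ i : Fin (L ++ [A]).length, n ∈ (L ++ [A]).get i → (i : ℕ) = i0)] at hU'
  simp only [fun i0 : ℕ => fa_snoc L A (fun i X => n ∈ X → i = i0)] at hU'
  rw [valid_snoc] at hV
  obtain ⟨⟨v1, a, b, hab, rfl⟩, v2, ⟨v3, v3'⟩, ⟨v4, v4'⟩, v5, v5'⟩ := hV
  simp only [Finset.mem_Icc] at *
  have hb : b ≤ n + 1 := ((v2 b).2 (Or.inr ⟨hab, le_rfl⟩)).2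
  have key : a ≤ n ∧ b = n + 1 ∧ ∀ i : Fin L.length, n ∉ L.get i := by
    rcases hU' with ⟨i0, p, q, -, -⟩ | ⟨p, q, r, -⟩
    · have e := v3' i0 _ q a ⟨le_rfl, hab⟩
      have e' := v4' i0 _ q ⟨by omega, by omega⟩
      simp at e'
      omega
    · exact ⟨p.1, by omega, fun i hi => by have := r i hi; have := i.2; omega⟩
  obtain ⟨k1, rfl, k3⟩ := key
  have hA : Finset.Icc a (n + 1) \ {n + 1} = Finset.Icc a n := by
    ext x; simp; omega
  have k4 : ∀ i : Fin L.length, n + 1 ∉ L.get i := fun i hi => by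
    have := v3' i _ hi n ⟨k1, by omega⟩
    omega
  have ha : a < n := by
    by_contra hc
    have : a = n := by omega
    subst this
    by_cases hl : 1 ≤ L.length
    · obtain ⟨j, -, hj⟩ := v5' hl (by simp; omega) a (by omega) (by intro x hx; exact hx.1) h1
      exact k3 j hj
    · rcases (v2 cmin).1 (by omega) with ⟨i, -⟩ | h
      · have := i.2; omega
      · omega
  refine ⟨by omega, ?_, ?_⟩
  · rw [hA, valid_snoc]
    refine ⟨⟨v1, a, n, k1, rfl⟩, ?_, ⟨v3, ?_⟩, ⟨v4, ?_⟩, v5, ?_⟩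
    · intro c
      simp only [Finset.mem_Icc]
      by_cases hc : c = n + 1
      · subst hc
        constructor
        · omega
        · rintro (⟨i, hi⟩ | h)
          · exact absurd hi (k4 i)
          · omega
      · have := v2 c
        constructor
        · intro h
          rcases this.1 (by omega) with h | h
          · exact Or.inl h
          · right; omega
        · intro h
          have := this.2 (h.imp id (by omega))
          omega
    · intro i s hs t ht
      simp only [Finset.mem_Icc] at ht
      exact v3' i s hs t (by omega)
    · intro i c hc hc'
      simp only [Finset.mem_Icc] at hc'
      obtain ⟨w1, w2, w3⟩ := v4' i c hc (by omega)
      refine ⟨w1, ?_, w3⟩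
      simp; omega
    · intro hl _ c hc hm
      simp only [Finset.mem_Icc] at hc hm
      exact v5' hl (by simp; omega) c (by omega) (by
        intro x hx
        have := hm a (by omega)
        omega)
  · rintro ⟨-, h⟩
    have := h a (by rw [hA]; simp; omega)
    omega

theorem bwd (cmin n : ℕ) (M : ℕ → ℕ) (L : List (Finset ℕ)) (A : Finset ℕ)
    (h2 : cmin + 1 ≤ n)
    (hV : IsValidTuple cmin n M (L ++ [A])) (hQ : PropQ (n + 1) (L ++ [A])) :
    n + 1 ∉ A ∧ IsValidTuple cmin (n + 1) M (L ++ [A ∪ {n + 1}]) ∧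
     ∃ i0 : Fin (L ++ [A ∪ {n + 1}]).length, n ∈ (L ++ [A ∪ {n + 1}]).get i0 ∧
        n + 1 ∈ (L ++ [A ∪ {n + 1}]).get i0 ∧
          ∀ i : Fin (L ++ [A ∪ {n + 1}]).length, n ∈ (L ++ [A ∪ {n + 1}]).get i → i = i0 := by
  rw [valid_snoc] at hV
  obtain ⟨⟨v1, a, b, hab, rfl⟩, v2, ⟨v3, v3'⟩, ⟨v4, v4'⟩, v5, v5'⟩ := hV
  simp only [Finset.mem_Icc] at *
  have hb : b ≤ n := ((v2 b).2 (Or.inr ⟨hab, le_rfl⟩)).2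
  have hbn : b = n := by
    rcases (v2 n).1 (by omega) with ⟨i, hi⟩ | h
    · have := v3' i n hi b ⟨hab, le_rfl⟩
      omega
    · omega
  subst hbn
  have ha : a < b := by
    by_contra hc
    have : a = b := by omega
    subst this
    obtain ⟨q1, q2⟩ := hQ ⟨by simp, by simp⟩
    simp at q1
    have hlt : L.length - 1 < L.length := by omega
    have e : (L ++ [Finset.Icc a a]).getD ((L ++ [Finset.Icc a a]).length - 2) ∅
        = L.get ⟨L.length - 1, hlt⟩ := by
      have : (L ++ [Finset.Icc a a]).length - 2 = L.length - 1 := by simp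
      rw [this, List.getD_append _ _ _ _ hlt, List.getD_eq_getElem _ _ hlt]
      rfl
    rw [e] at q2
    have := v4' ⟨L.length - 1, hlt⟩ a q2 (by omega)
    simp at this
  have k3 : ∀ i : Fin L.length, b ∉ L.get i := fun i hi => by
    have := v3' i _ hi a (by omega)
    omega
  have k4 : ∀ i : Fin L.length, b + 1 ∉ L.get i := fun i hi => by
    have := v3' i _ hi a (by omega)
    omega
  have hA : Finset.Icc a b ∪ {b + 1} = Finset.Icc a (b + 1) := by
    ext x; simp; omega
  rw [hA]
  refine ⟨by omega, ?_, ?_⟩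
  · rw [valid_snoc]
    refine ⟨⟨v1, a, b + 1, by omega, rfl⟩, ?_, ⟨v3, ?_⟩, ⟨v4, ?_⟩, v5, ?_⟩
    · intro c
      simp only [Finset.mem_Icc]
      by_cases hc : c = b + 1
      · subst hc
        exact ⟨fun _ => Or.inr (by omega), fun _ => by omega⟩
      · have := v2 c
        constructor
        · intro h
          rcases this.1 (by omega) with h | h
          · exact Or.inl h
          · right; omega
        · intro h
          have := this.2 (h.imp id (by omega))
          omega
    · intro i s hs t ht
      simp only [Finset.mem_Icc] at ht
      have := v3' i s hs a (by omega)
      omega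
    · intro i c hc hc'
      simp only [Finset.mem_Icc] at hc'
      have : c ≠ b + 1 := fun h => k4 i (h ▸ hc)
      obtain ⟨w1, w2, w3⟩ := v4' i c hc (by omega)
      refine ⟨w1, ?_, w3⟩
      simp; omega
    · intro hl _ c hc hm
      simp only [Finset.mem_Icc] at hc hm
      have := hm a (by omega)
      exact v5' hl (by simp; omega) c (by omega) (by
        intro x hx
        omega)
  · refine ⟨⟨L.length, by simp⟩, by simp; omega, by simp; omega, ?_⟩
    intro i hi
    apply Fin.ext
    revert i
    exact (fa_snoc L _ (fun i X => b ∈ X → i = L.length)).2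
      ⟨fun i hi => absurd hi (k3 i), fun _ => rfl⟩

/-- Suppose `m_{cmax-1} > 1` and `cmax ≥ cmin + 2`. Replacing the last set `S_k`
by `S_k \ {cmax}` is a bijection from the valid tuples for `M` in which `cmax - 1`
belongs to exactly one of the sets and that set also contains `cmax`, onto the
valid tuples for `M'` satisfying property (Q); its inverse replaces the last set
`S'_k` by `S'_k ∪ {cmax}`. -/
theorem bijOn_unique_overlap_case (cmin cmax : ℕ) (M : ℕ → ℕ)
    (h2 : cmin + 2 ≤ cmax) (hM : IsBlockTuple cmin cmax M)
    (h1 : 1 < M (cmax - 1)) :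
    Set.BijOn
      (fun S : List (Finset ℕ) => S.dropLast ++ [S.getLastD ∅ \ {cmax}])
      {S : List (Finset ℕ) | IsValidTuple cmin cmax M S ∧
        ∃ i0 : Fin S.length, cmax - 1 ∈ S.get i0 ∧ cmax ∈ S.get i0 ∧
          ∀ i : Fin S.length, cmax - 1 ∈ S.get i → i = i0}
      {S' : List (Finset ℕ) | IsValidTuple cmin (cmax - 1) M S' ∧ PropQ cmax S'} ∧
    Set.InvOn
      (fun S' : List (Finset ℕ) => S'.dropLast ++ [S'.getLastD ∅ ∪ {cmax}])
      (fun S : List (Finset ℕ) => S.dropLast ++ [S.getLastD ∅ \ {cmax}])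
      {S : List (Finset ℕ) | IsValidTuple cmin cmax M S ∧
        ∃ i0 : Fin S.length, cmax - 1 ∈ S.get i0 ∧ cmax ∈ S.get i0 ∧
          ∀ i : Fin S.length, cmax - 1 ∈ S.get i → i = i0}
      {S' : List (Finset ℕ) | IsValidTuple cmin (cmax - 1) M S' ∧ PropQ cmax S'} := by
  obtain ⟨n, rfl⟩ : ∃ n, cmax = n + 1 := ⟨cmax - 1, by omega⟩
  simp only [Nat.add_sub_cancel] at *
  set f := fun S : List (Finset ℕ) => S.dropLast ++ [S.getLastD ∅ \ {n + 1}] with hf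
  set g := fun S' : List (Finset ℕ) => S'.dropLast ++ [S'.getLastD ∅ ∪ {n + 1}] with hg
  have fe : ∀ L A, f (L ++ [A]) = L ++ [A \ {n + 1}] := by intro L A; simp [hf]
  have ge : ∀ L A, g (L ++ [A]) = L ++ [A ∪ {n + 1}] := by intro L A; simp [hg]
  have nonempty : ∀ m S, cmin ≤ m → IsValidTuple cmin m M S → ∃ L A, S = L ++ [A] := by
    intro m S hm hS
    rcases List.eq_nil_or_concat S with rfl | ⟨L, A, rfl⟩
    · obtain ⟨i, -⟩ := (hS.2.1 cmin).1 (by simp; omega)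
      exact i.elim0
    · exact ⟨L, A, by simp⟩
  rw [and_comm]
  refine (fun h => ⟨h.1, h.1.bijOn h.2.1 h.2.2⟩) (?_ : _ ∧ _ ∧ _)
  refine ⟨⟨?_, ?_⟩, ?_, ?_⟩
  · rintro S ⟨hV, hU⟩
    obtain ⟨L, A, rfl⟩ := nonempty _ S (by omega) hV
    have h := (fwd cmin n M L A (by omega) h1 hV hU).1
    rw [fe, ge, Finset.sdiff_union_of_subset (by simpa using h)]
  · rintro S ⟨hV, hQ⟩
    obtain ⟨L, A, rfl⟩ := nonempty _ S (by omega) hV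
    have h := (bwd cmin n M L A (by omega) hV hQ).1
    rw [ge, fe, Finset.union_sdiff_cancel_right (by simpa using h)]
  · rintro S ⟨hV, hU⟩
    obtain ⟨L, A, rfl⟩ := nonempty _ S (by omega) hV
    rw [fe]
    exact (fwd cmin n M L A (by omega) h1 hV hU).2
  · rintro S ⟨hV, hQ⟩
    obtain ⟨L, A, rfl⟩ := nonempty _ S (by omega) hV
    rw [ge]
    exact (bwd cmin n M L A (by omega) hV hQ).2
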